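/- arXiv:math-ph/0109009 — 7 statements merged into one kernel-verified Lean document; each statement's English description precedes it below -/
import Mathlib

section
/- Let A be a unital Banach algebra with a continuous algebra automorphism T : A → A. Fix integers M, N ≥ 0 and functions U_m : ℝ → A for −M ≤ m ≤ N. Let φ : ℝ → A be differentiable with φ(t) a unit for every t, satisfying φ'(t) = Σ_{m=−M}^{N} U_m(t)·T^m(φ(t)) for all t. Set σ(t) := φ(t)·(T(φ(t)))⁻¹, and define B_m(t) ∈ A for all m ∈ ℤ by B_0(t) = 1 and B_{m+1}(t) = (T^m(σ(t)))⁻¹·B_m(t) for every m ∈ ℤ (for m < 0 this reads B_m(t) = T^m(σ(t))·B_{m+1}(t)). Then σ is differentiable and for all t: σ'(t) = Σ_{m=−M}^{N} [ U_m(t)·B_m(t)·σ(t) − σ(t)·T(U_m(t))·B_{m+1}(t)·σ(t) ]. -/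
/-!
The products `B m * φ` and the iterates `T ^ m φ` satisfy the same recursion
`y (m + 1) = (T ^ m σ)⁻¹ * y m` and agree at `m = 0`, so `B m * φ = T ^ m φ` for every integer `m`.
The noncommutative quotient rule gives `σ' = φ' * (T φ)⁻¹ - σ * T φ' * (T φ)⁻¹`; substituting the
equation for `φ'` leaves terms `T ^ m φ * (T φ)⁻¹ = B m * σ`.

The quotient rule rests on the resolvent identity `x⁻¹ - a⁻¹ = x⁻¹ * (a - x) * a⁻¹`: it bounds `x⁻¹`
for units `x` near a unit `a`, and applied twice it makes the first-order remainder of inversion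
quadratic in `x - a`.
-/

open Filter Topology Asymptotics

open scoped Ring

section RingInverse

variable {A : Type*} [NormedRing A]

theorem norm_ringInverse_le_two_mul {a x : A} (ha : IsUnit a) (hx : IsUnit x)
    (hax : ‖a - x‖ * ‖a⁻¹ʳ‖ ≤ 1 / 2) : ‖x⁻¹ʳ‖ ≤ 2 * ‖a⁻¹ʳ‖ := by
  have resolvent : x⁻¹ʳ = a⁻¹ʳ + x⁻¹ʳ * ((a - x) * a⁻¹ʳ) := by
    rw [← mul_assoc, ← Ring.inverse_sub_inverse (iff_of_true hx ha), add_sub_cancel]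
  have bound : ‖x⁻¹ʳ‖ ≤ ‖a⁻¹ʳ‖ + ‖x⁻¹ʳ‖ * (1 / 2) :=
    calc ‖x⁻¹ʳ‖ = ‖a⁻¹ʳ + x⁻¹ʳ * ((a - x) * a⁻¹ʳ)‖ := congrArg _ resolvent
      _ ≤ ‖a⁻¹ʳ‖ + ‖x⁻¹ʳ‖ * (‖a - x‖ * ‖a⁻¹ʳ‖) :=
        norm_add_le_of_le le_rfl (norm_mul_le_of_le le_rfl (norm_mul_le _ _))
      _ ≤ ‖a⁻¹ʳ‖ + ‖x⁻¹ʳ‖ * (1 / 2) := by gcongr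
  linarith

theorem isBigO_one_ringInverse_nhdsWithin_isUnit {a : A} (ha : IsUnit a) :
    Ring.inverse =O[𝓝[{x | IsUnit x}] a] (fun _ ↦ (1 : ℝ)) := by
  have near : ∀ᶠ x in 𝓝 a, ‖a - x‖ * ‖a⁻¹ʳ‖ < 1 / 2 :=
    ContinuousAt.eventually_lt (by fun_prop) continuousAt_const (by simp)
  refine .of_bound (2 * ‖a⁻¹ʳ‖) ?_
  filter_upwards [self_mem_nhdsWithin, near.filter_mono nhdsWithin_le_nhds] with x hx hax
  simpa using norm_ringInverse_le_two_mul ha hx hax.le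

theorem ringInverse_sub_ringInverse_add_eq {R : Type*} [Ring R] {a x : R} (ha : IsUnit a)
    (hx : IsUnit x) :
    x⁻¹ʳ - a⁻¹ʳ + a⁻¹ʳ * (x - a) * a⁻¹ʳ = x⁻¹ʳ * (x - a) * a⁻¹ʳ * (x - a) * a⁻¹ʳ := by
  have resolvent : x⁻¹ʳ - a⁻¹ʳ = x⁻¹ʳ * (a - x) * a⁻¹ʳ :=
    Ring.inverse_sub_inverse (iff_of_true hx ha)
  calc x⁻¹ʳ - a⁻¹ʳ + a⁻¹ʳ * (x - a) * a⁻¹ʳ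
      = x⁻¹ʳ * (a - x) * a⁻¹ʳ + a⁻¹ʳ * (x - a) * a⁻¹ʳ := by rw [resolvent]
    _ = (x⁻¹ʳ - a⁻¹ʳ) * (a - x) * a⁻¹ʳ := by noncomm_ring
    _ = x⁻¹ʳ * (a - x) * a⁻¹ʳ * (a - x) * a⁻¹ʳ := by rw [resolvent]
    _ = x⁻¹ʳ * (x - a) * a⁻¹ʳ * (x - a) * a⁻¹ʳ := by noncomm_ring

variable {𝕜 : Type*} [NontriviallyNormedField 𝕜] [NormedAlgebra 𝕜 A]

theorem hasFDerivWithinAt_ringInverse_isUnit {a : A} (ha : IsUnit a) :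
    HasFDerivWithinAt Ring.inverse (-ContinuousLinearMap.mulLeftRight 𝕜 A a⁻¹ʳ a⁻¹ʳ)
      {x | IsUnit x} a := by
  have displacement : (fun x ↦ x - a) =o[𝓝[{x | IsUnit x}] a] (fun _ ↦ (1 : ℝ)) :=
    (isLittleO_one_iff ℝ).2 <| tendsto_sub_nhds_zero_iff.2 nhdsWithin_le_nhds
  have inverse_const : (fun _ ↦ a⁻¹ʳ) =O[𝓝[{x | IsUnit x}] a] (fun _ ↦ (1 : ℝ)) :=
    isBigO_const_const _ one_ne_zero _
  have remainder : (fun x ↦ x⁻¹ʳ * (x - a) * a⁻¹ʳ * (x - a) * a⁻¹ʳ)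
      =o[𝓝[{x | IsUnit x}] a] (fun x ↦ x - a) := by
    simpa using ((((isBigO_one_ringInverse_nhdsWithin_isUnit ha).mul_isLittleO
      displacement).mul_isBigO inverse_const).mul_isBigO
        (isBigO_refl (fun x ↦ x - a) _).norm_right).mul_isBigO inverse_const
  refine .of_isLittleO (remainder.congr' ?_ .rfl)
  filter_upwards [self_mem_nhdsWithin] with x hx
  simp [← ringInverse_sub_ringInverse_add_eq ha hx]

theorem hasDerivAt_mul_ringInverse {f g : 𝕜 → A} {f' g' : A} {t : 𝕜} (hf : HasDerivAt f f' t)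
    (hg : HasDerivAt g g' t) (hgu : ∀ᶠ s in 𝓝 t, IsUnit (g s)) :
    HasDerivAt (fun s ↦ f s * (g s)⁻¹ʳ)
      (f' * (g t)⁻¹ʳ - f t * (g t)⁻¹ʳ * g' * (g t)⁻¹ʳ) t := by
  have inverse_deriv : HasDerivAt (fun s ↦ (g s)⁻¹ʳ) (-((g t)⁻¹ʳ * g' * (g t)⁻¹ʳ)) t :=
    (hasFDerivWithinAt_ringInverse_isUnit hgu.self_of_nhds).comp_hasDerivAt t hg hgu
  refine (hf.mul inverse_deriv).congr_deriv ?_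
  simp only [mul_neg, mul_assoc, sub_eq_add_neg]

end RingInverse

section DressingFactor

variable {A : Type*} [Semiring A]

/-- The Darboux dressing factor `σ = a · (T a)⁻¹`. -/
noncomputable def dressingFactor (T : A ≃+* A) (a : A) : A := a * (T a)⁻¹ʳ

/-- `B : ℤ → A` is the family of lattice Bell polynomials of `s`. One recursion covers both signs of
the index: for a unit `s` it also reads `B m = (T ^ m) s * B (m + 1)`. For a non-unit `s` of a
nontrivial ring there is no such family, since `Ring.inverse` is then zero and forces `B 0 = 0`. -/
structure IsLatticeBell (T : A ≃+* A) (s : A) (B : ℤ → A) : Prop where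
  zero : B 0 = 1
  succ (m : ℤ) : B (m + 1) = ((T ^ m) s)⁻¹ʳ * B m

variable {T : A ≃+* A} {a : A}

theorem isUnit_dressingFactor (ha : IsUnit a) : IsUnit (dressingFactor T a) :=
  ha.mul (ha.map T).ringInverse

theorem zpow_add_one_apply_eq_ringInverse_dressingFactor_mul (ha : IsUnit a) (m : ℤ) :
    (T ^ (m + 1)) a = ((T ^ m) (dressingFactor T a))⁻¹ʳ * (T ^ m) a := by
  refine ((Ring.inverse_mul_eq_iff_eq_mul _ _ _ ((isUnit_dressingFactor ha).map (T ^ m))).2 ?_).symm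
  rw [zpow_add_one, RingAut.mul_apply, ← map_mul, dressingFactor,
    Ring.inverse_mul_cancel_right _ _ (ha.map T)]

theorem IsLatticeBell.mul_eq_zpow_apply {B : ℤ → A} (hB : IsLatticeBell T (dressingFactor T a) B)
    (ha : IsUnit a) (m : ℤ) : B m * a = (T ^ m) a := by
  have succ_iff (k : ℤ) : B (k + 1) * a = (T ^ (k + 1)) a ↔ B k * a = (T ^ k) a := by
    rw [hB.succ, mul_assoc, zpow_add_one_apply_eq_ringInverse_dressingFactor_mul ha]
    exact ((isUnit_dressingFactor ha).map (T ^ k)).ringInverse.mul_right_inj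
  induction m using Int.induction_on with
  | zero => simp [hB.zero]
  | succ k ih => exact (succ_iff k).2 ih
  | pred k ih => exact (succ_iff _).1 (by rwa [sub_add_cancel])

theorem IsLatticeBell.mul_dressingFactor {B : ℤ → A}
    (hB : IsLatticeBell T (dressingFactor T a) B) (ha : IsUnit a) (m : ℤ) :
    B m * dressingFactor T a = (T ^ m) a * (T a)⁻¹ʳ := by
  rw [← hB.mul_eq_zpow_apply ha, dressingFactor, mul_assoc]

end DressingFactor

theorem hasDerivAt_dressingFactor {𝕜 A : Type*} [NontriviallyNormedField 𝕜] [NormedRing A]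
    [NormedAlgebra 𝕜 A] {T : A ≃+* A} (hT : Continuous T)
    (hTsmul : ∀ (c : 𝕜) (a : A), T (c • a) = c • T a) {φ : 𝕜 → A} {φ' : A} {t : 𝕜}
    (hφu : ∀ᶠ s in 𝓝 t, IsUnit (φ s)) (hφ : HasDerivAt φ φ' t) :
    HasDerivAt (fun s ↦ dressingFactor T (φ s))
      (φ' * (T (φ t))⁻¹ʳ - dressingFactor T (φ t) * T φ' * (T (φ t))⁻¹ʳ) t := by
  let L : A →L[𝕜] A := { (T : A →+ A) with map_smul' := hTsmul, cont := hT }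
  have hTφ : HasDerivAt (fun s ↦ T (φ s)) (T φ') t := L.hasFDerivAt.comp_hasDerivAt t hφ
  exact hasDerivAt_mul_ringInverse hφ hTφ (hφu.mono fun _ hs ↦ hs.map T)

theorem dressing_factor_evolution_first_kind_general {𝕜 A : Type*} [NontriviallyNormedField 𝕜]
    [NormedRing A] [NormedAlgebra 𝕜 A] {T : A ≃+* A} (hT : Continuous T)
    (hTsmul : ∀ (c : 𝕜) (a : A), T (c • a) = c • T a) {I : Finset ℤ} {U : ℤ → A}
    {φ : 𝕜 → A} {t : 𝕜} (hφu : ∀ᶠ s in 𝓝 t, IsUnit (φ s))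
    (hφ : HasDerivAt φ (∑ m ∈ I, U m * (T ^ m) (φ t)) t)
    {B : ℤ → A} (hB : IsLatticeBell T (dressingFactor T (φ t)) B) :
    HasDerivAt (fun s ↦ dressingFactor T (φ s))
      (∑ m ∈ I, (U m * B m * dressingFactor T (φ t) -
        dressingFactor T (φ t) * T (U m) * B (m + 1) * dressingFactor T (φ t))) t := by
  refine (hasDerivAt_dressingFactor hT hTsmul hφu hφ).congr_deriv ?_
  have map_zpow_apply (m : ℤ) : T ((T ^ m) (φ t)) = (T ^ (m + 1)) (φ t) := by
    rw [add_comm, zpow_one_add, RingAut.mul_apply]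
  simp only [map_sum, map_mul, map_zpow_apply, Finset.sum_mul, Finset.mul_sum,
    ← Finset.sum_sub_distrib, mul_assoc, hB.mul_dressingFactor hφu.self_of_nhds]

/-- In a unital Banach algebra `A` with continuous automorphism `T`,
if a unit-valued differentiable `φ` solves `φ' = Σ_{m=-M}^{N} U_m · T^m φ`, then the
dressing factor `σ = φ·(Tφ)⁻¹` is differentiable with
`σ' = Σ_{m=-M}^{N} [U_m · B_m · σ − σ · T(U_m) · B_{m+1} · σ]`, where the lattice Bell
polynomials `B_m`, `m ∈ ℤ`, satisfy `B_0 = 1` and `B_{m+1} = (T^m σ)⁻¹ · B_m`. -/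
theorem dressing_factor_evolution_first_kind
    {A : Type*} [NormedRing A] [NormedAlgebra ℝ A] [CompleteSpace A]
    (T : A ≃+* A) (hT : Continuous T) (M N : ℕ) (U : ℤ → ℝ → A)
    (φ : ℝ → A) (hφu : ∀ t, IsUnit (φ t))
    (hφ : ∀ t, HasDerivAt φ
      (∑ m ∈ Finset.Icc (-(M : ℤ)) (N : ℤ), U m t * (T ^ m) (φ t)) t)
    (σ : ℝ → A) (hσ : ∀ t, σ t = φ t * Ring.inverse (T (φ t)))
    (B : ℤ → ℝ → A) (hB0 : ∀ t, B 0 t = 1)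
    (hBrec : ∀ (m : ℤ) (t : ℝ), B (m + 1) t = Ring.inverse ((T ^ m) (σ t)) * B m t) :
    ∀ t, HasDerivAt σ
      (∑ m ∈ Finset.Icc (-(M : ℤ)) (N : ℤ),
        (U m t * B m t * σ t - σ t * T (U m t) * B (m + 1) t * σ t)) t := by
  obtain rfl : σ = fun s ↦ dressingFactor T (φ s) := funext hσ
  exact fun t ↦ dressing_factor_evolution_first_kind_general hT (map_real_smul T hT)
    (.of_forall hφu) (hφ t) ⟨hB0 t, fun m ↦ hBrec m t⟩
end

section
/- Let A be a unital Banach algebra with a continuous algebra automorphism T : A → A. Fix integers M, N ≥ 0 and families U, U⁺ : ℤ → (ℝ → A) with U_m = U⁺_m = 0 for m outside [−M, N]. Let σ : ℝ → A be differentiable, and assume the recurrence relations hold for every m ∈ ℤ and every t: U⁺_m(t) − U⁺_{m−1}(t)·T^{m−1}(σ(t)) = U_m(t) − σ(t)·T(U_{m−1}(t)) − δ_{m,1}·σ'(t), where δ_{m,1} = 1 if m = 1 and 0 otherwise. Then for every differentiable ψ : ℝ → A satisfying ψ'(t) = Σ_{m=−M}^{N} U_m(t)·T^m(ψ(t)) for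 all t, the Darboux transform ψ⁺(t) := ψ(t) − σ(t)·T(ψ(t)) satisfies ψ⁺'(t) = Σ_{m∈ℤ} U⁺_m(t)·T^m(ψ⁺(t)) for all t (the sum being finite). -/
/-!
Write `ψ⁺ = ψ - σ * T ψ`. Multiplying the recurrence on the right by `T^m ψ` gives, for every `m`,
`U⁺ₘ T^m ψ - U⁺ₘ₋₁ T^(m-1) (σ * T ψ) = Uₘ T^m ψ - σ * T (Uₘ₋₁ T^(m-1) ψ) - δₘ₁ σ' * T ψ`.
Summing over `m ∈ ℤ` and shifting the index in the terms with `m - 1` turns the left side into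
`∑ₘ U⁺ₘ T^m ψ⁺` and the right side into `ψ' - σ * T ψ' - σ' * T ψ`, which is the derivative of
`ψ⁺` because `T`, being additive and continuous, commutes with differentiation. Unconditional
summability is all that the shift needs.
-/

/-- The Darboux transformation of the first kind, `x ↦ x - s * T x`, for arbitrary `T`; applied
pointwise in time it is the paper's `ψ ↦ ψ - σ · Tψ`. -/
def darbouxTransform {A : Type*} [Mul A] [Sub A] (T : A → A) (s x : A) : A :=
  x - s * T x

/-- The transformation law of the potentials under the Darboux transformation of the first kind,
at one fixed time: `u` and `up` are the values of the families `U` and `U⁺`, and `s`, `s'` those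
of `σ` and its derivative. -/
def DarbouxRecurrence {A : Type*} [Ring A] (T : A ≃+* A) (u up : ℤ → A) (s s' : A) : Prop :=
  ∀ m : ℤ, up m - up (m - 1) * (T ^ (m - 1)) s
    = u m - s * T (u (m - 1)) - (if m = 1 then s' else 0)

section Automorphism

variable {R : Type*} [Mul R] [Add R] (T : R ≃+* R) (m : ℤ) (x : R)

lemma ringAut_zpow_sub_one_apply_apply : (T ^ (m - 1)) (T x) = (T ^ m) x := by
  rw [← RingAut.mul_apply, ← zpow_add_one, sub_add_cancel]

lemma ringAut_apply_zpow_sub_one_apply : T ((T ^ (m - 1)) x) = (T ^ m) x := by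
  rw [← RingAut.mul_apply, ← zpow_one_add, add_sub_cancel]

end Automorphism

lemma DarbouxRecurrence.mul_zpow_sub {A : Type*} [Ring A] {T : A ≃+* A} {u up : ℤ → A} {s s' : A}
    (h : DarbouxRecurrence T u up s s') (x : A) (m : ℤ) :
    up m * (T ^ m) x - up (m - 1) * (T ^ (m - 1)) (s * T x)
      = u m * (T ^ m) x - s * T (u (m - 1) * (T ^ (m - 1)) x)
        - (if m = 1 then s' * T x else 0) := by
  have delta : (if m = 1 then s' * T x else 0) = (if m = 1 then s' else 0) * (T ^ m) x := by
    split_ifs with hm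
    · rw [hm, zpow_one]
    · rw [zero_mul]
  rw [delta, map_mul, map_mul, ringAut_zpow_sub_one_apply_apply, ringAut_apply_zpow_sub_one_apply,
    ← mul_assoc, ← mul_assoc, ← sub_mul, ← sub_mul, ← sub_mul, h m]

lemma hasSum_comp_sub_one_iff {M : Type*} [AddCommMonoid M] [TopologicalSpace M] {f : ℤ → M}
    {a : M} : HasSum (fun m => f (m - 1)) a ↔ HasSum f a :=
  (Equiv.subRight (1 : ℤ)).hasSum_iff

lemma DarbouxRecurrence.hasSum_mul_zpow_darbouxTransform {A : Type*} [Ring A] [TopologicalSpace A]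
    [IsTopologicalRing A] {T : A ≃+* A} (hT : Continuous T) {u up : ℤ → A} {s s' x y : A}
    (h : DarbouxRecurrence T u up s s') (hu : HasSum (fun m => u m * (T ^ m) x) y)
    (hup : Summable fun m => up m * (T ^ m) x) :
    HasSum (fun m => up m * (T ^ m) (darbouxTransform T s x)) (y - (s' * T x + s * T y)) := by
  obtain ⟨a, ha⟩ := hup
  have shifted_u : HasSum (fun m => s * T (u (m - 1) * (T ^ (m - 1)) x)) (s * T y) :=
    hasSum_comp_sub_one_iff (f := fun m => s * T (u m * (T ^ m) x)).2 ((hu.map T hT).mul_left s)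
  have delta : HasSum (fun m : ℤ => if m = 1 then s' * T x else 0) (s' * T x) :=
    hasSum_ite_eq 1 _
  have difference : HasSum
      (fun m => up m * (T ^ m) x - up (m - 1) * (T ^ (m - 1)) (s * T x))
      (y - s * T y - s' * T x) := by
    simpa only [h.mul_zpow_sub x] using (hu.sub shifted_u).sub delta
  have product : HasSum (fun m => up m * (T ^ m) (s * T x)) (a - (y - s * T y - s' * T x)) := by
    rw [← hasSum_comp_sub_one_iff]
    simpa only [sub_sub_cancel] using ha.sub difference
  rw [sub_add_eq_sub_sub_swap]
  simpa only [darbouxTransform, map_sub, mul_sub, sub_sub_cancel] using ha.sub product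

lemma hasDerivAt_map_of_continuous {E F G : Type*} [NormedAddCommGroup E] [NormedSpace ℝ E]
    [NormedAddCommGroup F] [NormedSpace ℝ F] [FunLike G E F] [AddMonoidHomClass G E F]
    (f : G) (hf : Continuous f) {ψ : ℝ → E} {ψ' : E} {t : ℝ} (hψ : HasDerivAt ψ ψ' t) :
    HasDerivAt (fun r => f (ψ r)) (f ψ') t :=
  ((f : E →+ F).toRealLinearMap hf).hasFDerivAt.comp_hasDerivAt t hψ

section NormedAlgebra

variable {A : Type*} [NormedRing A] [NormedAlgebra ℝ A] {σ ψ : ℝ → A} {σ' ψ' : A} {t : ℝ}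

lemma hasDerivAt_darbouxTransform {G : Type*} [FunLike G A A] [AddMonoidHomClass G A A]
    (T : G) (hT : Continuous T) (hσ : HasDerivAt σ σ' t) (hψ : HasDerivAt ψ ψ' t) :
    HasDerivAt (fun r => darbouxTransform T (σ r) (ψ r))
      (ψ' - (σ' * T (ψ t) + σ t * T ψ')) t :=
  hψ.sub (hσ.mul (hasDerivAt_map_of_continuous T hT hψ))

theorem darboux_covariance_general_equation_general (T : A ≃+* A) (hT : Continuous T)
    {u up : ℤ → A} (hσ : HasDerivAt σ σ' t) (hrec : DarbouxRecurrence T u up (σ t) σ')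
    (hψ : HasDerivAt ψ ψ' t) (hu : HasSum (fun m => u m * (T ^ m) (ψ t)) ψ')
    (hup : Summable fun m => up m * (T ^ m) (ψ t)) :
    Summable (fun m => up m * (T ^ m) (darbouxTransform T (σ t) (ψ t))) ∧
      HasDerivAt (fun r => darbouxTransform T (σ r) (ψ r))
        (∑' m, up m * (T ^ m) (darbouxTransform T (σ t) (ψ t))) t := by
  have hsum := hrec.hasSum_mul_zpow_darbouxTransform hT hu hup
  exact ⟨hsum.summable, hsum.tsum_eq ▸ hasDerivAt_darbouxTransform T hT hσ hψ⟩

end NormedAlgebra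

/-- Darboux covariance of the first kind for
`ψ' = Σ_{m=-M}^{N} U_m · T^m ψ` in a unital Banach algebra with continuous
automorphism `T`: if the potentials `U⁺_m` satisfy the recurrence
`U⁺_m − U⁺_{m-1}·T^{m-1}(σ) = U_m − σ·T(U_{m-1}) − δ_{m,1}·σ'`, then the Darboux
transform `ψ⁺ = ψ − σ·Tψ` of any solution `ψ` solves `ψ⁺' = Σ_{m∈ℤ} U⁺_m · T^m ψ⁺`. -/
theorem darboux_covariance_general_equation
    {A : Type*} [NormedRing A] [NormedAlgebra ℝ A] [CompleteSpace A]
    (T : A ≃+* A) (hT : Continuous T) (M N : ℕ)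
    (U Up : ℤ → ℝ → A)
    (hUsupp : ∀ m : ℤ, m ∉ Finset.Icc (-(M : ℤ)) (N : ℤ) → U m = 0)
    (hUpsupp : ∀ m : ℤ, m ∉ Finset.Icc (-(M : ℤ)) (N : ℤ) → Up m = 0)
    (σ σ' : ℝ → A) (hσ : ∀ t, HasDerivAt σ (σ' t) t)
    (hrec : ∀ (m : ℤ) (t : ℝ),
      Up m t - Up (m - 1) t * (T ^ (m - 1)) (σ t)
        = U m t - σ t * T (U (m - 1) t) - (if m = 1 then σ' t else 0))
    (ψ : ℝ → A)
    (hψ : ∀ t, HasDerivAt ψ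
      (∑ m ∈ Finset.Icc (-(M : ℤ)) (N : ℤ), U m t * (T ^ m) (ψ t)) t) :
    ∀ t, HasDerivAt (fun s => ψ s - σ s * T (ψ s))
      (∑ᶠ m : ℤ, Up m t * (T ^ m) (ψ t - σ t * T (ψ t))) t := by
  intro t
  have hUt (m : ℤ) (hm : m ∉ Finset.Icc (-(M : ℤ)) N) : U m t * (T ^ m) (ψ t) = 0 := by
    rw [hUsupp m hm, Pi.zero_apply, zero_mul]
  have hUpt (x : A) (m : ℤ) (hm : m ∉ Finset.Icc (-(M : ℤ)) N) : Up m t * (T ^ m) x = 0 := by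
    rw [hUpsupp m hm, Pi.zero_apply, zero_mul]
  have hfin (x : A) : (Function.support fun m => Up m t * (T ^ m) x).Finite :=
    (Finset.finite_toSet _).subset (Function.support_subset_iff'.2 (hUpt x))
  rw [← tsum_eq_finsum (L := .unconditional ℤ) (hfin _)]
  exact (darboux_covariance_general_equation_general T hT (hσ t) (fun m => hrec m t) (hψ t)
    (hasSum_sum_of_ne_finset_zero hUt) (summable_of_hasFiniteSupport (hfin _))).2
end

section
/- Let A be a unital Banach algebra with a continuous algebra automorphism T : A → A, and let μ ∈ A satisfy T(μ) = μ. Let φ : ℝ → A be differentiable with φ(t) a unit for every t and φ'(t) = μ·φ(t) for all t. Then σ(t) := φ(t)·(T(φ(t)))⁻¹ is differentiable and σ'(t) = μ·σ(t) − σ(t)·μ for all t. -/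
section LogarithmicDerivative

variable {𝕜 A : Type*} [NontriviallyNormedField 𝕜] [NormedRing A] [NormedAlgebra 𝕜 A]
  [HasSummableGeomSeries A] {φ ψ : 𝕜 → A} {μ ν ψ' : A} {t : 𝕜}

theorem hasDerivAt_ringInverse_comp (hψ : HasDerivAt ψ ψ' t) (hψu : IsUnit (ψ t)) :
    HasDerivAt (fun s ↦ Ring.inverse (ψ s))
      (-(Ring.inverse (ψ t) * ψ' * Ring.inverse (ψ t))) t := by
  obtain ⟨u, hu⟩ := hψu
  have hinv : HasFDerivAt Ring.inverse _ (ψ t) := hu ▸ hasFDerivAt_ringInverse (𝕜 := 𝕜) u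
  simpa [← hu] using! hinv.comp_hasDerivAt t hψ

theorem hasDerivAt_mul_ringInverse_of_hasDerivAt_mul (hφ : HasDerivAt φ (μ * φ t) t)
    (hψ : HasDerivAt ψ (ν * ψ t) t) (hψu : IsUnit (ψ t)) :
    HasDerivAt (fun s ↦ φ s * Ring.inverse (ψ s))
      (μ * (φ t * Ring.inverse (ψ t)) - φ t * Ring.inverse (ψ t) * ν) t := by
  have hψinv : HasDerivAt (fun s ↦ Ring.inverse (ψ s)) (-(Ring.inverse (ψ t) * ν)) t := by
    simpa only [mul_assoc, Ring.mul_inverse_cancel _ hψu, mul_one] using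
      hasDerivAt_ringInverse_comp hψ hψu
  simpa only [mul_assoc, mul_neg, ← sub_eq_add_neg] using! hφ.mul hψinv

end LogarithmicDerivative

theorem hasDerivAt_addMonoidHom_comp {E F : Type*} [NormedAddCommGroup E] [NormedSpace ℝ E]
    [NormedAddCommGroup F] [NormedSpace ℝ F] (T : E →+ F) (hT : Continuous T)
    {f : ℝ → E} {f' : E} {t : ℝ} (hf : HasDerivAt f f' t) :
    HasDerivAt (fun s ↦ T (f s)) (T f') t :=
  (T.toRealLinearMap hT).hasFDerivAt.comp_hasDerivAt t hf

theorem stationary_dressing_factor_commutator_general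
    {A : Type*} [NormedRing A] [NormedAlgebra ℝ A] [HasSummableGeomSeries A]
    (T : A →+* A) (hT : Continuous T) {μ : A} {φ : ℝ → A} {t : ℝ}
    (hφ : HasDerivAt φ (μ * φ t) t) (hTφu : IsUnit (T (φ t))) :
    HasDerivAt (fun s ↦ φ s * Ring.inverse (T (φ s)))
      (μ * (φ t * Ring.inverse (T (φ t))) - φ t * Ring.inverse (T (φ t)) * T μ) t := by
  have hTφ : HasDerivAt (fun s ↦ T (φ s)) (T μ * T (φ t)) t :=
    map_mul T μ (φ t) ▸ hasDerivAt_addMonoidHom_comp (T : A →+ A) hT hφ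
  exact hasDerivAt_mul_ringInverse_of_hasDerivAt_mul hφ hTφ hTφu

/-- In a unital Banach algebra with continuous automorphism `T`, if
`T(μ) = μ` and a unit-valued differentiable `φ` satisfies `φ' = μ·φ`, then the dressing
factor `σ = φ·(Tφ)⁻¹` is differentiable with `σ' = μ·σ − σ·μ`. -/
theorem stationary_dressing_factor_commutator
    {A : Type*} [NormedRing A] [NormedAlgebra ℝ A] [CompleteSpace A]
    (T : A ≃+* A) (hT : Continuous T) (μ : A) (hμ : T μ = μ)
    (φ : ℝ → A) (hφu : ∀ t, IsUnit (φ t))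
    (hφ : ∀ t, HasDerivAt φ (μ * φ t) t)
    (σ : ℝ → A) (hσ : ∀ t, σ t = φ t * Ring.inverse (T (φ t))) :
    ∀ t, HasDerivAt σ (μ * σ t - σ t * μ) t := by
  intro t
  simpa [← hσ, hμ] using
    stationary_dressing_factor_commutator_general (T : A →+* A) hT (hφ t) ((hφu t).map T)
end

section
/- Let R be an associative unital ring with a ring automorphism T : R → R. Let J, μ ∈ R with T(J) = J and T(μ) = μ, and suppose μ − J is a unit of R. Let σ_n, σ_{n+1} be units of R such that (μ − J)·σ_{n+1} = σ_n · T((μ − J)·σ_n) · (T(σ_n))⁻¹. Then σ_{n+1} = (μ − J)⁻¹ · σ_n · (μ − J). -/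
theorem map_mul_unit_mul_inv_map {M N : Type*} [Monoid M] [Monoid N] (f : M →* N)
    (a : M) (σ : Mˣ) :
    f (a * σ) * ((Units.map f σ)⁻¹ : Nˣ) = f a := by
  rw [map_mul, ← Units.coe_map, Units.mul_inv_cancel_right]

theorem zs_dressing_chain_trivial_general {M : Type*} [Monoid M] (T : M →* M)
    (u σ : Mˣ) (τ : M) :
    u * τ = σ * T (u * σ) * ((Units.map T σ)⁻¹ : Mˣ) ↔ τ = (u⁻¹ : Mˣ) * σ * T u := by
  rw [mul_assoc (σ : M), map_mul_unit_mul_inv_map, mul_assoc, Units.eq_inv_mul_iff_mul_eq]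

/-- For the dressing chain of the generalized Zakharov–Shabat problem with
`T(J) = J`, `T(μ) = μ` and `μ − J` a unit, the chain equation
`(μ − J)·σ_{n+1} = σ_n · T((μ − J)·σ_n) · (Tσ_n)⁻¹` forces the trivial dressing
`σ_{n+1} = (μ − J)⁻¹ · σ_n · (μ − J)`. -/
theorem zs_dressing_chain_trivial {R : Type*} [Ring R] (T : R ≃+* R)
    (J μ : R) (hJ : T J = J) (hμ : T μ = μ)
    (u : Rˣ) (hu : (u : R) = μ - J)
    (σn σn1 : Rˣ)
    (hchain : (μ - J) * (σn1 : R)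
      = (σn : R) * T ((μ - J) * (σn : R)) * (((Units.map (T : R →* R) σn)⁻¹ : Rˣ) : R)) :
    (σn1 : R) = ((u⁻¹ : Rˣ) : R) * (σn : R) * (μ - J) := by
  have hTu : T (u : R) = μ - J := by rw [hu, map_sub, hJ, hμ]
  rw [← hu] at hchain
  rw [← hTu]
  exact (zs_dressing_chain_trivial_general (T : R →* R) u σn σn1).mp hchain
end

section
/- Let A be a unital Banach algebra with a continuous algebra automorphism T : A → A, and let u, v, w : ℝ → A. Let φ : ℝ → A be differentiable with φ(t) a unit for every t, satisfying φ'(t) = u(t)·T(φ(t)) + v(t)·φ(t) + w(t)·T⁻¹(φ(t)) for all t. Set σ(t) := T(φ(t))·φ(t)⁻¹ and F(t) := u(t)·σ(t) + v(t) + w(t)·(T⁻¹(σ(t)))⁻¹. Then σ is differentiable and σ'(t) = T(F(t))·σ(t) − σ(t)·F(t) for all t. -/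
/-! Writing the lattice equation as `φ' = F φ` and applying `T`, which commutes with the derivative,
gives `(Tφ)' = T(F) (Tφ)`. Now for any solutions of `φ' = F φ` and `ψ' = G ψ` the quotient
`σ = ψ φ⁻¹` intertwines the two coefficients, `σ' = G σ - σ F`; take `ψ = Tφ` and `G = T(F)`.
Inversion is continuous on the units of any normed ring, being the restriction of inversion in the
completion, and `φ(s)⁻¹ - φ(t)⁻¹ = -φ(s)⁻¹ (φ(s) - φ(t)) φ(t)⁻¹` turns this continuity into
differentiability along `φ`. -/

open Filter Topology
open scoped Ring

section Inverse

theorem map_ringInverse_of_isUnit {M N G : Type*} [MonoidWithZero M] [MonoidWithZero N]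
    [FunLike G M N] [MonoidHomClass G M N] (f : G) {a : M} (ha : IsUnit a) :
    f a⁻¹ʳ = (f a)⁻¹ʳ := by
  rw [← (ha.map f).mul_left_inj, ← map_mul, Ring.inverse_mul_cancel _ ha, map_one,
    Ring.inverse_mul_cancel _ (ha.map f)]

theorem ringInverse_symm_map_mul_ringInverse_mul_self {M : Type*} [MonoidWithZero M]
    (T : M ≃* M) {a : M} (ha : IsUnit a) : (T.symm (T a * a⁻¹ʳ))⁻¹ʳ * a = T.symm a := by
  have hTa : IsUnit (T.symm a) := ha.map T.symm
  rw [map_mul, T.symm_apply_apply, map_ringInverse_of_isUnit T.symm ha,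
    Ring.inverse_mul (.inl ha), Ring.inverse_inverse hTa, Ring.inverse_mul_cancel_right _ _ ha]

theorem three_term_coeff_mul_self {R : Type*} [Semiring R] (T : R ≃* R) (u v w : R) {a : R}
    (ha : IsUnit a) :
    (u * (T a * a⁻¹ʳ) + v + w * (T.symm (T a * a⁻¹ʳ))⁻¹ʳ) * a =
      u * T a + v * a + w * T.symm a := by
  rw [add_mul, add_mul, mul_assoc u, Ring.inverse_mul_cancel_right _ _ ha, mul_assoc w,
    ringInverse_symm_map_mul_ringInverse_mul_self T ha]

theorem tendsto_ringInverse {α A : Type*} [SeminormedRing A] {l : Filter α} {f : α → A} {a : A}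
    (hf : Tendsto f l (𝓝 a)) (ha : IsUnit a) (hfu : ∀ᶠ x in l, IsUnit (f x)) :
    Tendsto (fun x ↦ (f x)⁻¹ʳ) l (𝓝 a⁻¹ʳ) := by
  let ι : A →+* UniformSpace.Completion A := UniformSpace.Completion.coeRingHom
  have hι : IsInducing ι := (UniformSpace.Completion.isUniformInducing_coe A).isInducing
  obtain ⟨p, hp⟩ := ha.map ι
  have hinv : Tendsto (fun x ↦ (ι (f x))⁻¹ʳ) l (𝓝 (ι a)⁻¹ʳ) := by
    rw [← hp]
    exact (NormedRing.inverse_continuousAt p).tendsto.comp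
      (hp ▸ (hι.continuous.tendsto a).comp hf)
  rw [hι.tendsto_nhds_iff, map_ringInverse_of_isUnit ι ha]
  exact hinv.congr' (hfu.mono fun x hx ↦ (map_ringInverse_of_isUnit ι hx).symm)

end Inverse

section Derivative

variable {𝕜 A : Type*} [NontriviallyNormedField 𝕜] [NormedRing A] [NormedAlgebra 𝕜 A]
  {φ ψ : 𝕜 → A} {t : 𝕜}

theorem hasDerivAt_ringInverse {φ' : A} (hφ : HasDerivAt φ φ' t)
    (hφu : ∀ᶠ s in 𝓝 t, IsUnit (φ s)) :
    HasDerivAt (fun s ↦ (φ s)⁻¹ʳ) (-((φ t)⁻¹ʳ * φ' * (φ t)⁻¹ʳ)) t := by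
  have ht : IsUnit (φ t) := hφu.self_of_nhds
  have hinv : Tendsto (fun s ↦ (φ s)⁻¹ʳ) (𝓝[≠] t) (𝓝 (φ t)⁻¹ʳ) :=
    (tendsto_ringInverse hφ.continuousAt ht hφu).mono_left nhdsWithin_le_nhds
  rw [hasDerivAt_iff_tendsto_slope] at hφ ⊢
  have hslope : ∀ᶠ s in 𝓝[≠] t,
      -((φ s)⁻¹ʳ * slope φ t s * (φ t)⁻¹ʳ) = slope (fun s ↦ (φ s)⁻¹ʳ) t s := by
    filter_upwards [hφu.filter_mono nhdsWithin_le_nhds] with s hs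
    rw [slope_def_module, slope_def_module,
      Ring.inverse_sub_inverse (iff_of_true hs ht), mul_smul_comm, smul_mul_assoc, ← smul_neg,
      ← neg_sub (φ s), mul_neg, neg_mul]
  exact ((hinv.mul hφ).mul_const _).neg.congr' hslope

theorem hasDerivAt_mul_ringInverse_s15 {F G : A} (hψ : HasDerivAt ψ (G * ψ t) t)
    (hφ : HasDerivAt φ (F * φ t) t) (hφu : ∀ᶠ s in 𝓝 t, IsUnit (φ s)) :
    HasDerivAt (fun s ↦ ψ s * (φ s)⁻¹ʳ) (G * (ψ t * (φ t)⁻¹ʳ) - ψ t * (φ t)⁻¹ʳ * F) t := by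
  have hinv : HasDerivAt (fun s ↦ (φ s)⁻¹ʳ) (-((φ t)⁻¹ʳ * F)) t := by
    simpa only [mul_assoc, Ring.mul_inverse_cancel _ hφu.self_of_nhds, mul_one]
      using hasDerivAt_ringInverse hφ hφu
  simpa only [mul_assoc, mul_neg, ← sub_eq_add_neg] using hψ.fun_mul hinv

theorem hasDerivAt_map_mul_ringInverse (T : A →ₐ[𝕜] A) (hT : Continuous T) {F : A}
    (hφ : HasDerivAt φ (F * φ t) t) (hφu : ∀ᶠ s in 𝓝 t, IsUnit (φ s)) :
    HasDerivAt (fun s ↦ T (φ s) * (φ s)⁻¹ʳ)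
      (T F * (T (φ t) * (φ t)⁻¹ʳ) - T (φ t) * (φ t)⁻¹ʳ * F) t := by
  let L : A →L[𝕜] A := ⟨T.toLinearMap, hT⟩
  have hTφ : HasDerivAt (fun s ↦ T (φ s)) (T F * T (φ t)) t :=
    map_mul T F (φ t) ▸ L.hasFDerivAt.comp_hasDerivAt t hφ
  exact hasDerivAt_mul_ringInverse_s15 hTφ hφ hφu

theorem nahm_sigma_evolution_general (T : A ≃ₐ[𝕜] A) (hT : Continuous T) {u v w : A}
    (hφu : ∀ᶠ s in 𝓝 t, IsUnit (φ s))
    (hφ : HasDerivAt φ (u * T (φ t) + v * φ t + w * T.symm (φ t)) t)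
    {σ : 𝕜 → A} (hσ : ∀ s, σ s = T (φ s) * (φ s)⁻¹ʳ)
    {F : A} (hF : F = u * σ t + v + w * (T.symm (σ t))⁻¹ʳ) :
    HasDerivAt σ (T F * σ t - σ t * F) t := by
  have hFφ : F * φ t = u * T (φ t) + v * φ t + w * T.symm (φ t) := by
    rw [hF, hσ]
    exact three_term_coeff_mul_self (T : A ≃* A) u v w hφu.self_of_nhds
  rw [← hFφ] at hφ
  obtain rfl : σ = fun s ↦ T (φ s) * (φ s)⁻¹ʳ := funext hσ
  exact hasDerivAt_map_mul_ringInverse (T : A →ₐ[𝕜] A) hT hφ hφu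

end Derivative

theorem map_algebraMap_real {A B G : Type*} [Ring A] [Algebra ℝ A] [TopologicalSpace A]
    [ContinuousSMul ℝ A] [Ring B] [Algebra ℝ B] [TopologicalSpace B] [ContinuousSMul ℝ B]
    [T2Space B] [FunLike G A B] [RingHomClass G A B] (f : G) (hf : Continuous f) (r : ℝ) :
    f (algebraMap ℝ A r) = algebraMap ℝ B r := by
  rw [Algebra.algebraMap_eq_smul_one, map_real_smul f hf, map_one, Algebra.algebraMap_eq_smul_one]

/-- In a unital Banach algebra with continuous automorphism `T`, if a
unit-valued differentiable `φ` satisfies `φ' = u·Tφ + v·φ + w·T⁻¹φ`, then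
`σ = (Tφ)·φ⁻¹` is differentiable and satisfies `σ' = T(F)·σ − σ·F`, where
`F = u·σ + v + w·(T⁻¹σ)⁻¹`. -/
theorem nahm_sigma_evolution
    {A : Type*} [NormedRing A] [NormedAlgebra ℝ A] [CompleteSpace A]
    (T : A ≃+* A) (hT : Continuous T) (u v w : ℝ → A)
    (φ : ℝ → A) (hφu : ∀ t, IsUnit (φ t))
    (hφ : ∀ t, HasDerivAt φ
      (u t * T (φ t) + v t * φ t + w t * T.symm (φ t)) t)
    (σ : ℝ → A) (hσ : ∀ t, σ t = T (φ t) * Ring.inverse (φ t))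
    (F : ℝ → A)
    (hF : ∀ t, F t = u t * σ t + v t + w t * Ring.inverse (T.symm (σ t))) :
    ∀ t, HasDerivAt σ (T (F t) * σ t - σ t * F t) t :=
  fun t ↦ nahm_sigma_evolution_general (.ofRingEquiv (map_algebraMap_real T hT)) hT
    (.of_forall hφu) (hφ t) hσ (hF t)
end

section
/- Let R be an associative unital ring with a ring automorphism T : R → R, let u, v, w ∈ R, and let λ, μ ∈ R be central elements with T(λ) = λ and T(μ) = μ. Let φ be a unit of R satisfying u·T(φ) + v·φ + w·T⁻¹(φ) = μ·φ, set σ := T(φ)·φ⁻¹, and let g be a unit of R. Define u[1] := g·T(u)·(T(g))⁻¹, v[1] := g·( T(v) − σ·u + T(u)·T(σ) )·g⁻¹, and w[1] := g·σ·w·(T⁻¹(g·σ))⁻¹. Then for every ψ ∈ R satisfying u·T(ψ) + v·ψ + w·T⁻¹(ψ) = λ·ψ, the element ψ[1] := g·(T(ψ) − σ·ψ) satisfies u[1]·T(ψ[1]) + v[1]·ψ[1] + w[1]·T⁻¹(ψ[1]) = λ·ψ[1]. -/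
/-!
Write `L = u·T + v + w·T⁻¹` and let `L₁` be the Darboux-transformed operator. Comparing
coefficients of powers of `T` in `L₁ ∘ (T - σ)` and `(T - σ) ∘ L`, only the `T⁰` terms can
differ, and they agree exactly when the Riccati expression `ρ = u·σ + v + w·(T⁻¹σ)⁻¹` satisfies
`T(ρ)·σ = σ·ρ`. If `σ = T(φ)·φ⁻¹` then `L φ = ρ·φ`, so this condition says that `φ⁻¹·L φ` is
fixed by `T`. The gauge factor `g` conjugates `L₁` by left multiplication. The resulting
intertwiner `g·(T - σ)` commutes with right multiplication by elements fixed by `T`, hence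
preserves eigenvalues written on the right.
-/

section Semiring

variable {R : Type*} [Semiring R] (T : R ≃+* R)

/-- The operator `u·T + v + w·T⁻¹` of the Nahm spectral problem, as a function on `R`. -/
def nahmOperator (u v w ψ : R) : R :=
  u * T ψ + v * ψ + w * T.symm ψ

/-- The Riccati expression `u·σ + v + w·(T⁻¹σ)⁻¹` of the Nahm operator, for a unit `σ` playing
the role of a logarithmic difference `T(φ)·φ⁻¹`. The inverse is encoded as `T⁻¹(σ⁻¹)`. -/
def nahmRiccati (u v w : R) (σ : Rˣ) : R :=
  u * σ + v + w * T.symm ↑σ⁻¹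

theorem nahmOperator_gauge (u v w : R) (g : Rˣ) (ψ : R) :
    nahmOperator T (g * u * T ↑g⁻¹) (g * v * ↑g⁻¹) (g * w * T.symm ↑g⁻¹) (g * ψ) =
      g * nahmOperator T u v w ψ := by
  have map_inv_mul (S : R ≃+* R) : S ↑g⁻¹ * S (g * ψ) = S ψ := by
    rw [← map_mul, Units.inv_mul_cancel_left]
  simp only [nahmOperator, mul_add, mul_assoc, map_inv_mul, Units.inv_mul_cancel_left]

variable {T} {u v w φ : R} {σ : Rˣ}

theorem nahmOperator_eq_nahmRiccati_mul (hσ : σ * φ = T φ) :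
    nahmOperator T u v w φ = nahmRiccati T u v w σ * φ := by
  have symm_apply : T.symm φ = T.symm ↑σ⁻¹ * φ := by
    calc T.symm φ = T.symm (↑σ⁻¹ * (σ * φ)) := by rw [Units.inv_mul_cancel_left]
      _ = T.symm ↑σ⁻¹ * φ := by rw [hσ, map_mul, T.symm_apply_apply]
  rw [nahmOperator, nahmRiccati, ← hσ, symm_apply, add_mul, add_mul, mul_assoc u, mul_assoc w]

theorem map_nahmRiccati_mul {φ : Rˣ} {m : R} (hm : T m = m) (hσ : (σ : R) * φ = T φ)
    (hφ : nahmOperator T u v w φ = φ * m) :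
    T (nahmRiccati T u v w σ) * σ = σ * nahmRiccati T u v w σ := by
  have riccati_mul : nahmRiccati T u v w σ * φ = φ * m :=
    (nahmOperator_eq_nahmRiccati_mul hσ).symm.trans hφ
  rw [← Units.mul_left_inj φ]
  calc T (nahmRiccati T u v w σ) * σ * φ
      = T (nahmRiccati T u v w σ * φ) := by rw [mul_assoc, hσ, map_mul]
    _ = σ * (φ * m) := by rw [riccati_mul, map_mul, hm, ← hσ, mul_assoc]
    _ = σ * nahmRiccati T u v w σ * φ := by rw [← riccati_mul, mul_assoc]

end Semiring

section Ring

variable {R : Type*} [Ring R] {T : R ≃+* R} {u v w : R} {σ : Rˣ}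

theorem nahmOperator_darboux
    (hρ : T (nahmRiccati T u v w σ) * σ = σ * nahmRiccati T u v w σ) (ψ : R) :
    nahmOperator T (T u) (T v - σ * u + T u * T σ) (σ * w * T.symm ↑σ⁻¹) (T ψ - σ * ψ) =
      T (nahmOperator T u v w ψ) - σ * nahmOperator T u v w ψ := by
  have symm_inv_mul : T.symm ↑σ⁻¹ * T.symm σ = 1 := by
    rw [← map_mul, Units.inv_mul, map_one]
  have constant_terms : σ * w * T.symm ↑σ⁻¹ - (T v - σ * u + T u * T σ) * σ = T w - σ * v := by
    have expanded : T u * T σ * σ + T v * σ + T w =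
        σ * u * σ + σ * v + σ * w * T.symm ↑σ⁻¹ := by
      simpa [nahmRiccati, add_mul, mul_add, mul_assoc] using hρ
    linear_combination (norm := noncomm_ring) -expanded
  calc nahmOperator T (T u) (T v - σ * u + T u * T σ) (σ * w * T.symm ↑σ⁻¹) (T ψ - σ * ψ)
      = T u * T (T ψ) + (T v - σ * u) * T ψ
          + (σ * w * T.symm ↑σ⁻¹ - (T v - σ * u + T u * T σ) * σ) * ψ
          - σ * w * (T.symm ↑σ⁻¹ * T.symm σ) * T.symm ψ := by
        simp only [nahmOperator, map_sub, map_mul, T.symm_apply_apply]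
        noncomm_ring
    _ = T u * T (T ψ) + (T v - σ * u) * T ψ + (T w - σ * v) * ψ - σ * w * T.symm ψ := by
        rw [constant_terms, symm_inv_mul, mul_one]
    _ = T (nahmOperator T u v w ψ) - σ * nahmOperator T u v w ψ := by
        simp only [nahmOperator, map_add, map_mul, T.apply_symm_apply]
        noncomm_ring

theorem nahmOperator_darboux_gauge
    (hρ : T (nahmRiccati T u v w σ) * σ = σ * nahmRiccati T u v w σ) (g : Rˣ) (ψ : R) :
    nahmOperator T (g * T u * T ↑g⁻¹) (g * (T v - σ * u + T u * T σ) * ↑g⁻¹)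
        (g * σ * w * T.symm ↑(g * σ)⁻¹) (g * (T ψ - σ * ψ)) =
      g * (T (nahmOperator T u v w ψ) - σ * nahmOperator T u v w ψ) := by
  have w_eq : g * σ * w * T.symm ↑(g * σ)⁻¹ =
      g * (σ * w * T.symm ↑σ⁻¹) * T.symm ↑g⁻¹ := by
    simp only [mul_inv_rev, Units.val_mul, map_mul, mul_assoc]
  rw [w_eq, nahmOperator_gauge, nahmOperator_darboux hρ]

theorem nahm_spectral_darboux_gauge_covariance_general {l m : R} (hl : T l = l) (hm : T m = m)
    {φ : Rˣ} (hφ : nahmOperator T u v w φ = φ * m)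
    (hσ : σ = Units.map (T : R →* R) φ * φ⁻¹) (g : Rˣ)
    {ψ : R} (hψ : nahmOperator T u v w ψ = ψ * l) :
    nahmOperator T (g * T u * T ↑g⁻¹) (g * (T v - σ * u + T u * T σ) * ↑g⁻¹)
        (g * σ * w * T.symm ↑(g * σ)⁻¹) (g * (T ψ - σ * ψ)) =
      g * (T ψ - σ * ψ) * l := by
  have σ_mul : (σ : R) * φ = T φ := by simp [hσ]
  rw [nahmOperator_darboux_gauge (map_nahmRiccati_mul hm σ_mul hφ), hψ, map_mul, hl,
    ← mul_assoc (σ : R), ← sub_mul, mul_assoc]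

end Ring

/-- Darboux–gauge covariance of the Nahm spectral problem: with central
`λ, μ` fixed by `T`, an eigenfunction unit `φ` (`u·Tφ + v·φ + w·T⁻¹φ = μ·φ`), dressing
factor `σ = (Tφ)·φ⁻¹`, a unit `g`, and transformed potentials
`u[1] = g·T(u)·(Tg)⁻¹`, `v[1] = g·(T(v) − σ·u + T(u)·T(σ))·g⁻¹`,
`w[1] = g·σ·w·(T⁻¹(g·σ))⁻¹`, every solution `ψ` of `u·Tψ + v·ψ + w·T⁻¹ψ = λ·ψ` yields a
solution `ψ[1] = g·(Tψ − σ·ψ)` of the transformed spectral problem with the same `λ`. -/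
theorem nahm_spectral_darboux_gauge_covariance {R : Type*} [Ring R] (T : R ≃+* R)
    (u v w lam μ : R)
    (hlamc : ∀ x : R, lam * x = x * lam) (hμc : ∀ x : R, μ * x = x * μ)
    (hlamT : T lam = lam) (hμT : T μ = μ)
    (φ : Rˣ)
    (hφ : u * T (φ : R) + v * (φ : R) + w * T.symm (φ : R) = μ * (φ : R))
    (σ : Rˣ) (hσ : σ = Units.map (T : R →* R) φ * φ⁻¹)
    (g : Rˣ) (u1 v1 w1 : R)
    (hu1 : u1 = (g : R) * T u * (((Units.map (T : R →* R) g)⁻¹ : Rˣ) : R))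
    (hv1 : v1 = (g : R) * (T v - (σ : R) * u + T u * T (σ : R)) * ((g⁻¹ : Rˣ) : R))
    (hw1 : w1 = (g : R) * (σ : R) * w
      * (((Units.map (T.symm : R →* R) (g * σ))⁻¹ : Rˣ) : R))
    (ψ : R) (hψ : u * T ψ + v * ψ + w * T.symm ψ = lam * ψ)
    (ψ1 : R) (hψ1 : ψ1 = (g : R) * (T ψ - (σ : R) * ψ)) :
    u1 * T ψ1 + v1 * ψ1 + w1 * T.symm ψ1 = lam * ψ1 := by
  subst hu1 hv1 hw1 hψ1
  rw [hlamc]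
  exact nahm_spectral_darboux_gauge_covariance_general hlamT hμT
    (hφ.trans (hμc φ)) hσ g (hψ.trans (hlamc ψ))
end

section
/- Let A be a unital Banach algebra with a continuous algebra automorphism T : A → A, and let p, q : ℝ → A. Let φ : ℝ → A be differentiable with φ(t) a unit for every t, satisfying φ'(t) = q(t)·φ(t) + p(t)·T(φ(t)) for all t. Then σ(t) := T(φ(t))·φ(t)⁻¹ is differentiable and σ'(t) = T(q(t))·σ(t) + T(p(t))·T(σ(t))·σ(t) − σ(t)·q(t) − σ(t)·p(t)·σ(t) for all t. -/
/-! With `σ = (Tφ) φ⁻¹` one has `Tφ = σ φ`, so the evolution equation reads `φ' = (q + p σ) φ`, and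
applying `T` gives `(Tφ)' = (Tq + Tp Tσ) Tφ`. A quotient `g f⁻¹` of solutions of `f' = a f` and
`g' = b g` evolves by `(g f⁻¹)' = b (g f⁻¹) - (g f⁻¹) a`, which is the Riccati equation. -/

section

open Asymptotics Filter Topology
open scoped Ring

variable {A : Type*} [NormedRing A]

theorem one_sub_mul_norm_ringInverse_sub_le {x y : A} (hx : IsUnit x) (hy : IsUnit y) :
    (1 - ‖x⁻¹ʳ‖ * ‖y - x‖) * ‖y⁻¹ʳ - x⁻¹ʳ‖ ≤ ‖x⁻¹ʳ‖ ^ 2 * ‖y - x‖ := by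
  have hy_norm : ‖y⁻¹ʳ‖ ≤ ‖y⁻¹ʳ - x⁻¹ʳ‖ + ‖x⁻¹ʳ‖ := norm_le_norm_sub_add _ _
  have hsub : ‖y⁻¹ʳ - x⁻¹ʳ‖ ≤ (‖y⁻¹ʳ - x⁻¹ʳ‖ + ‖x⁻¹ʳ‖) * ‖y - x‖ * ‖x⁻¹ʳ‖ :=
    calc ‖y⁻¹ʳ - x⁻¹ʳ‖ = ‖y⁻¹ʳ * (x - y) * x⁻¹ʳ‖ := by
          rw [Ring.inverse_sub_inverse (iff_of_true hy hx)]
      _ ≤ ‖y⁻¹ʳ‖ * ‖x - y‖ * ‖x⁻¹ʳ‖ := norm_mul₃_le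
      _ ≤ (‖y⁻¹ʳ - x⁻¹ʳ‖ + ‖x⁻¹ʳ‖) * ‖y - x‖ * ‖x⁻¹ʳ‖ := by
          rw [norm_sub_rev x y]
          gcongr
  linarith

theorem isBigO_ringInverse_sub {x : A} (hx : IsUnit x) :
    (fun y => y⁻¹ʳ - x⁻¹ʳ) =O[𝓝[{y | IsUnit y}] x] fun y => y - x := by
  have hnear : ∀ᶠ y in 𝓝 x, ‖x⁻¹ʳ‖ * ‖y - x‖ < 1 / 2 := by
    have hcont : ContinuousAt (fun y => ‖x⁻¹ʳ‖ * ‖y - x‖) x := by fun_prop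
    exact hcont.eventually_lt_const (by simp)
  refine .of_bound (2 * ‖x⁻¹ʳ‖ ^ 2) ?_
  filter_upwards [self_mem_nhdsWithin, nhdsWithin_le_nhds hnear] with y hy hsmall
  nlinarith [one_sub_mul_norm_ringInverse_sub_le hx hy, norm_nonneg (y⁻¹ʳ - x⁻¹ʳ)]

variable {𝕜 : Type*} [NontriviallyNormedField 𝕜] [NormedAlgebra 𝕜 A]

theorem hasFDerivWithinAt_ringInverse {x : A} (hx : IsUnit x) :
    HasFDerivWithinAt Ring.inverse (-ContinuousLinearMap.mulLeftRight 𝕜 A x⁻¹ʳ x⁻¹ʳ)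
      {y | IsUnit y} x := by
  have hsub : Tendsto (fun y => y - x) (𝓝[{y | IsUnit y}] x) (𝓝 0) :=
    (tendsto_sub_nhds_zero_iff.mpr tendsto_id).mono_left nhdsWithin_le_nhds
  have hinv : (fun y => y⁻¹ʳ - x⁻¹ʳ) =o[𝓝[{y | IsUnit y}] x] fun _ => (1 : ℝ) :=
    (isLittleO_one_iff ℝ).mpr ((isBigO_ringInverse_sub hx).trans_tendsto hsub)
  have hmul : (fun y => (x - y) * x⁻¹ʳ) =O[𝓝[{y | IsUnit y}] x] fun y => ‖y - x‖ :=
    .of_bound ‖x⁻¹ʳ‖ <| .of_forall fun y => by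
      simpa only [norm_norm, norm_sub_rev y x, mul_comm] using norm_mul_le (x - y) x⁻¹ʳ
  have hremainder : (fun y => (y⁻¹ʳ - x⁻¹ʳ) * ((x - y) * x⁻¹ʳ))
      =o[𝓝[{y | IsUnit y}] x] fun y => y - x := by
    simpa only [one_mul, isLittleO_norm_right] using hinv.mul_isBigO hmul
  refine hasFDerivWithinAt_iff_isLittleO.mpr (hremainder.congr' ?_ .rfl)
  filter_upwards [self_mem_nhdsWithin] with y hy
  calc (y⁻¹ʳ - x⁻¹ʳ) * ((x - y) * x⁻¹ʳ)
      = y⁻¹ʳ * (x - y) * x⁻¹ʳ + x⁻¹ʳ * (y - x) * x⁻¹ʳ := by noncomm_ring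
    _ = y⁻¹ʳ - x⁻¹ʳ - (-ContinuousLinearMap.mulLeftRight 𝕜 A x⁻¹ʳ x⁻¹ʳ) (y - x) := by
      rw [← Ring.inverse_sub_inverse (iff_of_true hy hx), neg_apply,
        ContinuousLinearMap.mulLeftRight_apply, sub_neg_eq_add]

theorem hasDerivAt_ringInverse_comp_s19 {f : 𝕜 → A} {f' : A} {t : 𝕜}
    (hf : HasDerivAt f f' t) (hu : ∀ᶠ s in 𝓝 t, IsUnit (f s)) :
    HasDerivAt (fun s => (f s)⁻¹ʳ) (-((f t)⁻¹ʳ * f' * (f t)⁻¹ʳ)) t :=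
  (hasFDerivWithinAt_ringInverse hu.self_of_nhds).comp_hasDerivAt t hf hu

theorem hasDerivAt_mul_ringInverse_of_linear {f g : 𝕜 → A} {a b : A} {t : 𝕜}
    (hf : HasDerivAt f (a * f t) t) (hg : HasDerivAt g (b * g t) t)
    (hu : ∀ᶠ s in 𝓝 t, IsUnit (f s)) :
    HasDerivAt (fun s => g s * (f s)⁻¹ʳ) (b * (g t * (f t)⁻¹ʳ) - g t * (f t)⁻¹ʳ * a) t := by
  have hquot := hg.fun_mul (hasDerivAt_ringInverse_comp_s19 hf hu)
  have hinv : (f t)⁻¹ʳ * (a * f t) * (f t)⁻¹ʳ = (f t)⁻¹ʳ * a := by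
    rw [← mul_assoc, Ring.mul_inverse_cancel_right _ _ hu.self_of_nhds]
  rwa [hinv, mul_neg, ← sub_eq_add_neg, mul_assoc b, ← mul_assoc (g t)] at hquot

theorem nahm_evolution_sigma_riccati_general (T : A →A[𝕜] A) {p q : A} {φ σ : 𝕜 → A} {t : 𝕜}
    (hφu : ∀ᶠ s in 𝓝 t, IsUnit (φ s)) (hφ : HasDerivAt φ (q * φ t + p * T (φ t)) t)
    (hσ : σ =ᶠ[𝓝 t] fun s => T (φ s) * (φ s)⁻¹ʳ) :
    HasDerivAt σ (T q * σ t + T p * T (σ t) * σ t - σ t * q - σ t * p * σ t) t := by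
  have hσt : T (φ t) * (φ t)⁻¹ʳ = σ t := hσ.self_of_nhds.symm
  have hTφ : T (φ t) = σ t * φ t := by
    rw [← hσt, Ring.inverse_mul_cancel_right _ _ hφu.self_of_nhds]
  have hφ_linear : HasDerivAt φ ((q + p * σ t) * φ t) t := by
    rwa [add_mul, mul_assoc, ← hTφ]
  have hTφ_linear : HasDerivAt (fun s => T (φ s)) ((T q + T p * T (σ t)) * T (φ t)) t := by
    rw [← map_mul, ← map_add, ← map_mul]
    exact T.toContinuousLinearMap.hasFDerivAt.comp_hasDerivAt t hφ_linear
  have hquot := hasDerivAt_mul_ringInverse_of_linear hφ_linear hTφ_linear hφu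
  rw [hσt] at hquot
  refine (hquot.congr_of_eventuallyEq hσ).congr_deriv ?_
  noncomm_ring

end

/-- In a unital Banach algebra with continuous automorphism `T`, if a
unit-valued differentiable `φ` satisfies the Nahm evolution equation
`φ' = q·φ + p·Tφ`, then `σ = (Tφ)·φ⁻¹` is differentiable with the Riccati-type evolution
`σ' = T(q)·σ + T(p)·T(σ)·σ − σ·q − σ·p·σ`. -/
theorem nahm_evolution_sigma_riccati
    {A : Type*} [NormedRing A] [NormedAlgebra ℝ A] [CompleteSpace A]
    (T : A ≃+* A) (hT : Continuous T) (p q : ℝ → A)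
    (φ : ℝ → A) (hφu : ∀ t, IsUnit (φ t))
    (hφ : ∀ t, HasDerivAt φ (q t * φ t + p t * T (φ t)) t)
    (σ : ℝ → A) (hσ : ∀ t, σ t = T (φ t) * Ring.inverse (φ t)) :
    ∀ t, HasDerivAt σ
      (T (q t) * σ t + T (p t) * T (σ t) * σ t - σ t * q t - σ t * p t * σ t) t :=
  let T' : A →A[ℝ] A := ⟨AlgHom.mk' (T : A →+* A) (map_real_smul T hT), hT⟩
  fun t => nahm_evolution_sigma_riccati_general T' (.of_forall hφu) (hφ t) (.of_forall hσ)
end
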